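/- (Skew Hensel's lemma.) Let f ∈ A[t,σ,δ] be a monic polynomial of degree d in t. Let g, h ∈ A[t,σ,δ] be monic polynomials of respective degrees m and d−m such that f̄ = ḡ·h̄ in K[t], and such that for every integer n ≥ 1 the residue polynomials ḡ and (h^{φⁿ})‾ are relatively prime in K[t]. Then there exist monic polynomials ĝ, ĥ ∈ A[t,σ,δ] of respective degrees m and d−m with ĝ‾ = ḡ and ĥ‾ = h̄, such that f = ĝ·ĥ. -/

import Mathlib

/-- `δ` is a `σ`-derivation of `A`: an additive map satisfying the Leibniz rule
`δ(ab) = σ(a)δ(b) + δ(a)b`. -/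
def IsSigmaDerivation {A : Type*} [Ring A] (σ : A →+* A) (δ : A → A) : Prop :=
  (∀ a b : A, δ (a + b) = δ a + δ b) ∧ (∀ a b : A, δ (a * b) = σ a * δ b + δ a * b)

/-- `R` is a skew polynomial ring `A[t,σ,δ]`: `A` embeds in `R` via `ι`, the variable
`t` satisfies `t·a = σ(a)·t + δ(a)`, and every element of `R` is uniquely a finite sum
`Σ ι(aᵢ) tⁱ`. -/
structure IsSkewPolyRing (A : Type*) [Ring A] (σ : A →+* A) (δ : A → A)
    (R : Type*) [Ring R] (ι : A →+* R) (t : R) : Prop where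
  t_mul : ∀ a : A, t * ι a = ι (σ a) * t + ι (δ a)
  exists_repr : ∀ r : R, ∃ c : ℕ →₀ A, r = ∑ i ∈ c.support, ι (c i) * t ^ i
  unique_repr : ∀ c c' : ℕ →₀ A,
    (∑ i ∈ c.support, ι (c i) * t ^ i) = (∑ i ∈ c'.support, ι (c' i) * t ^ i) → c = c'

/-!
Write `y = ι x`. The hypothesis on `φ` says that `y` can be moved to the left through any `p`,
at the price of replacing `p` by `φ⁻¹ p`. If `f ≡ G * H` modulo `yⁿ R`, say `f - G * H = yⁿ r`,
then `f - (G + yⁿ U) * (H + yⁿ V) ≡ yⁿ (r - U * H - φ⁻ⁿ(G) * V)` modulo `yⁿ⁺¹ R`, so the next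
approximation amounts to the Bézout equation `r = U * H + φ⁻ⁿ(G) * V` over the residue ring. It
is solvable with `deg U < m` and `deg V < d - m` because coprimality of `G` and `φⁿ(H)` is the
same as that of `φ⁻ⁿ(G)` and `H`. The approximations converge coefficientwise.
-/

open Polynomial

theorem exists_seq_of_forall_exists_succ {α : Type*} {P : ℕ → α → Prop} {Q : ℕ → α → α → Prop}
    {a : α} (zero : P 0 a) (succ : ∀ n b, P n b → ∃ c, P (n + 1) c ∧ Q n b c) :
    ∃ s : ℕ → α, s 0 = a ∧ ∀ n, P n (s n) ∧ Q n (s n) (s (n + 1)) := by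
  choose! next hnext using succ
  let s : ℕ → α := Nat.rec a next
  have hs (n : ℕ) : P n (s n) := by
    induction n with
    | zero => exact zero
    | succ n ih => exact (hnext n _ ih).1
  exact ⟨s, rfl, fun n => ⟨hs n, (hnext n _ (hs n)).2⟩⟩

theorem dvd_mul_left_of_normal {M : Type*} [Semigroup M] {y q : M} (hy : ∀ p, y ∣ p * y)
    (hq : y ∣ q) (p : M) : y ∣ p * q := by
  obtain ⟨r, rfl⟩ := hq
  rw [← mul_assoc]
  exact (hy p).mul_right r

theorem exists_degree_lt_eq_mul_add_mul {K : Type*} [CommRing K] {m l : ℕ} {g h r : K[X]}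
    (hg : g.degree ≤ m) (hh : h.degree ≤ l) (hhl : h.coeff l = 1) (hr : r.degree < (m + l : ℕ))
    (hgh : IsCoprime g h) :
    ∃ u v : K[X], u.degree < m ∧ v.degree < l ∧ r = u * h + g * v := by
  nontriviality K
  have h_degree : h.degree = l := degree_eq_of_le_of_coeff_ne_zero hh (hhl ▸ one_ne_zero)
  have h_monic : h.Monic := monic_of_degree_le l hh hhl
  obtain ⟨a, b, hab⟩ := hgh
  have hdiv := modByMonic_add_div (a * r) h
  set v := (a * r) %ₘ h
  set u := b * r + g * ((a * r) /ₘ h)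
  have hv : v.degree < l := h_degree ▸ degree_modByMonic_lt _ h_monic
  have hr_eq : r = u * h + g * v := by
    linear_combination (-r) * hab - g * hdiv
  have hgv : (g * v).degree < (m + l : ℕ) :=
    calc (g * v).degree ≤ g.degree + v.degree := degree_mul_le g v
      _ ≤ m + v.degree := by gcongr
      _ < m + l := WithBot.add_lt_add_left (WithBot.natCast_ne_bot m) hv
  have huh : u.degree + l < m + l := by
    rw [← h_degree, ← h_monic.degree_mul, eq_sub_of_add_eq hr_eq.symm, h_degree]
    exact (degree_sub_le _ _).trans_lt (max_lt hr hgv)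
  exact ⟨u, v, lt_of_add_lt_add_right huh, hv, hr_eq⟩

section Conjugation

variable {R : Type*} [Ring R] {y : R} {φ : R ≃+* R}

theorem pow_apply_mul_pow (hφ : ∀ p, φ p * y = y * p) (n : ℕ) (p : R) :
    (φ ^ n) p * y ^ n = y ^ n * p := by
  induction n generalizing p with
  | zero => simp
  | succ n ih =>
    calc (φ ^ n) (φ p) * y ^ (n + 1) = y ^ n * (φ p * y) := by
          rw [pow_succ, ← mul_assoc, ih, mul_assoc]
      _ = y ^ (n + 1) * p := by rw [hφ, pow_succ, mul_assoc]

theorem pow_apply_eq_self (hy : IsLeftRegular y) (hφ : ∀ p, φ p * y = y * p) (n : ℕ) :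
    (φ ^ n) y = y := by
  have hsymm : φ.symm y = y := hy (by simpa using (hφ (φ.symm y)).symm)
  have hfix : φ ∈ MulAction.stabilizer (R ≃+* R) y := (φ.symm_apply_eq.1 hsymm).symm
  exact pow_mem hfix n

theorem isCoprime_map_map_of_apply_eq_self {S : Type*} [CommRing S] {red : R →+* S}
    (hsurj : Function.Surjective red) (hker : ∀ p, red p = 0 ↔ y ∣ p) {ψ : R →+* R}
    (hψ : ψ y = y) {p q : R} (h : IsCoprime (red p) (red q)) :
    IsCoprime (red (ψ p)) (red (ψ q)) := by
  have hle : RingHom.ker red ≤ RingHom.ker (red.comp ψ) := fun p hp =>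
    (hker _).2 (hψ ▸ map_dvd ψ ((hker p).1 hp))
  have hlift := RingHom.liftOfRightInverse_comp_apply red _
    (Function.rightInverse_surjInv hsurj) ⟨red.comp ψ, hle⟩
  simpa only [hlift, RingHom.comp_apply] using
    h.map (red.liftOfRightInverse _ (Function.rightInverse_surjInv hsurj) ⟨red.comp ψ, hle⟩)

end Conjugation

namespace IsSkewPolyRing

variable {A R : Type*} [Ring A] [Ring R] {σ : A →+* A} {δ : A → A} {ι : A →+* R} {t : R}

/-- The coefficient isomorphism of a skew polynomial ring, with coefficients written on the left
of the powers of `t`. -/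
noncomputable def coeff (hR : IsSkewPolyRing A σ δ R ι t) : R ≃+ (ℕ →₀ A) :=
  (AddEquiv.ofBijective
    (Finsupp.liftAddHom fun i => (AddMonoidHom.mulRight (t ^ i)).comp ι.toAddMonoidHom)
    ⟨fun c c' h => hR.unique_repr c c' h, fun p => (hR.exists_repr p).imp fun _ h => h.symm⟩).symm

section Coefficients

variable (hR : IsSkewPolyRing A σ δ R ι t)

theorem coeff_symm_single (i : ℕ) (a : A) :
    hR.coeff.symm (Finsupp.single i a) = ι a * t ^ i :=
  Finsupp.liftAddHom_apply_single _ i a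

theorem coeff_C_mul_t_pow (a : A) (i : ℕ) : hR.coeff (ι a * t ^ i) = Finsupp.single i a := by
  rw [← hR.coeff_symm_single, AddEquiv.apply_symm_apply]

include hR in
theorem induction_on {motive : R → Prop} (p : R)
    (add : ∀ p q, motive p → motive q → motive (p + q))
    (monomial : ∀ a i, motive (ι a * t ^ i)) : motive p := by
  obtain ⟨c, rfl⟩ := hR.coeff.symm.surjective p
  induction c using Finsupp.induction_linear with
  | zero => simpa using monomial 0 0
  | add c c' hc hc' => simpa only [map_add] using add _ _ hc hc'
  | single i a => simpa only [coeff_symm_single] using monomial a i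

theorem coeff_C_mul (a : A) (p : R) (i : ℕ) : hR.coeff (ι a * p) i = a * hR.coeff p i := by
  induction p using hR.induction_on with
  | add p q hp hq => simp only [mul_add, map_add, Finsupp.add_apply, hp, hq]
  | monomial b j =>
    rw [← mul_assoc, ← map_mul, coeff_C_mul_t_pow, coeff_C_mul_t_pow, Finsupp.single_apply,
      Finsupp.single_apply, mul_ite, mul_zero]

theorem coeff_sum_range (c : ℕ → A) (k i : ℕ) :
    hR.coeff (∑ j ∈ Finset.range k, ι (c j) * t ^ j) i = if i < k then c i else 0 := by
  simp [Finsupp.finsetSum_apply, coeff_C_mul_t_pow, Finsupp.single_apply]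

theorem C_dvd_iff_dvd_coeff {a : A} {p : R} : ι a ∣ p ↔ ∀ i, a ∣ hR.coeff p i := by
  refine ⟨?_, fun h => ?_⟩
  · rintro ⟨q, rfl⟩ i
    exact ⟨_, hR.coeff_C_mul a q i⟩
  · rw [← hR.coeff.symm_apply_apply p, ← (hR.coeff p).sum_single, Finsupp.sum, map_sum]
    refine Finset.dvd_sum fun i _ => ?_
    rw [coeff_symm_single]
    exact (map_dvd ι (h i)).mul_right _

include hR in
theorem isLeftRegular_C {a : A} (ha : IsLeftRegular a) : IsLeftRegular (ι a) := by
  intro p q hpq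
  refine hR.coeff.injective (Finsupp.ext fun i => ha ?_)
  simpa only [coeff_C_mul] using congrArg (hR.coeff · i) hpq

include hR in
theorem eq_zero_of_forall_C_pow_dvd {x : A} (hsep : ∀ a : A, (∀ n : ℕ, x ^ n ∣ a) → a = 0)
    {p : R} (hp : ∀ n, ι x ^ n ∣ p) : p = 0 := by
  refine (map_eq_zero_iff hR.coeff hR.coeff.injective).1 (Finsupp.ext fun i => hsep _ fun n => ?_)
  exact hR.C_dvd_iff_dvd_coeff.1 (map_pow ι x n ▸ hp n) i

end Coefficients

/-- The additive group of skew polynomials of degree `< k`. -/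
def degreeLT (hR : IsSkewPolyRing A σ δ R ι t) (k : ℕ) : AddSubgroup R where
  carrier := {p | ∀ i, k ≤ i → hR.coeff p i = 0}
  zero_mem' := by simp
  add_mem' hp hq i hi := by simp [hp i hi, hq i hi]
  neg_mem' hp i hi := by simp [hp i hi]

/-- `p` is monic of degree `k`: it has the form `tᵏ + (terms of degree < k)`. -/
def IsMonicOfDegree (hR : IsSkewPolyRing A σ δ R ι t) (k : ℕ) (p : R) : Prop :=
  p - t ^ k ∈ hR.degreeLT k

section Degree

variable {hR : IsSkewPolyRing A σ δ R ι t} {k l : ℕ} {p q : R}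

theorem mem_degreeLT_iff_exists_sum :
    p ∈ hR.degreeLT k ↔ ∃ c : ℕ → A, p = ∑ i ∈ Finset.range k, ι (c i) * t ^ i := by
  refine ⟨fun hp => ⟨hR.coeff p, hR.coeff.injective (Finsupp.ext fun i => ?_)⟩, ?_⟩
  · rw [coeff_sum_range]
    split_ifs with hi
    · rfl
    · exact hp i (not_lt.1 hi)
  · rintro ⟨c, rfl⟩ i hi
    rw [coeff_sum_range, if_neg hi.not_gt]

theorem isMonicOfDegree_iff_exists_sum :
    hR.IsMonicOfDegree k p ↔ ∃ c : ℕ → A, p = t ^ k + ∑ i ∈ Finset.range k, ι (c i) * t ^ i := by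
  simp only [IsMonicOfDegree, mem_degreeLT_iff_exists_sum, sub_eq_iff_eq_add']

theorem degreeLT_mono (h : k ≤ l) : hR.degreeLT k ≤ hR.degreeLT l :=
  fun _ hp i hi => hp i (h.trans hi)

theorem C_mul_t_pow_mem_degreeLT (a : A) {i : ℕ} (hi : i < k) : ι a * t ^ i ∈ hR.degreeLT k := by
  intro j hj
  rw [coeff_C_mul_t_pow, Finsupp.single_eq_of_ne (by lia)]

theorem C_mem_degreeLT_one (a : A) : ι a ∈ hR.degreeLT 1 := by
  simpa using C_mul_t_pow_mem_degreeLT (hR := hR) a zero_lt_one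

theorem t_pow_mem_degreeLT (k : ℕ) : t ^ k ∈ hR.degreeLT (k + 1) := by
  simpa using C_mul_t_pow_mem_degreeLT (hR := hR) 1 k.lt_succ_self

theorem C_mul_mem_degreeLT (a : A) (hp : p ∈ hR.degreeLT k) : ι a * p ∈ hR.degreeLT k :=
  fun i hi => by rw [coeff_C_mul, hp i hi, mul_zero]

theorem mem_degreeLT_of_C_mul_mem {a : A} (ha : IsLeftRegular a) (h : ι a * p ∈ hR.degreeLT k) :
    p ∈ hR.degreeLT k :=
  fun i hi => ha (by simpa only [coeff_C_mul, mul_zero] using h i hi)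

theorem t_mul_mem_degreeLT (hp : p ∈ hR.degreeLT k) : t * p ∈ hR.degreeLT (k + 1) := by
  obtain ⟨c, rfl⟩ := mem_degreeLT_iff_exists_sum.1 hp
  rw [Finset.mul_sum]
  refine sum_mem fun i hi => ?_
  rw [Finset.mem_range] at hi
  rw [← mul_assoc, hR.t_mul, add_mul, mul_assoc, ← pow_succ']
  exact add_mem (C_mul_t_pow_mem_degreeLT _ (by lia)) (C_mul_t_pow_mem_degreeLT _ (by lia))

theorem t_pow_mul_mem_degreeLT (n : ℕ) (hp : p ∈ hR.degreeLT k) :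
    t ^ n * p ∈ hR.degreeLT (k + n) := by
  induction n with
  | zero => simpa using hp
  | succ n ih => rw [pow_succ', mul_assoc]; exact t_mul_mem_degreeLT ih

-- The bound is the true degree bound `k + l - 1`, written without truncated subtraction.
theorem mul_mem_degreeLT {n : ℕ} (hp : p ∈ hR.degreeLT k) (hq : q ∈ hR.degreeLT l)
    (hn : k + l ≤ n + 1) : p * q ∈ hR.degreeLT n := by
  obtain ⟨c, rfl⟩ := mem_degreeLT_iff_exists_sum.1 hp
  rw [Finset.sum_mul]
  refine sum_mem fun i hi => ?_
  rw [Finset.mem_range] at hi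
  rw [mul_assoc]
  exact degreeLT_mono (by lia) (C_mul_mem_degreeLT _ (t_pow_mul_mem_degreeLT i hq))

theorem mem_degreeLT_of_mul_C_eq {a : A} (ha : IsLeftRegular a) (h : p * ι a = ι a * q)
    (hp : p ∈ hR.degreeLT k) : q ∈ hR.degreeLT k :=
  mem_degreeLT_of_C_mul_mem ha (h ▸ mul_mem_degreeLT hp (C_mem_degreeLT_one a) le_rfl)

theorem exists_mem_degreeLT_eq_C_mul {a : A} (ha : IsLeftRegular a) (hp : p ∈ hR.degreeLT k)
    (h : ι a ∣ p) : ∃ q ∈ hR.degreeLT k, p = ι a * q := by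
  obtain ⟨q, rfl⟩ := h
  exact ⟨q, mem_degreeLT_of_C_mul_mem ha hp, rfl⟩

theorem IsMonicOfDegree.mem_degreeLT (hp : hR.IsMonicOfDegree k p) : p ∈ hR.degreeLT (k + 1) := by
  simpa using add_mem (degreeLT_mono k.le_succ hp) (t_pow_mem_degreeLT k)

theorem IsMonicOfDegree.coeff_eq_one (hp : hR.IsMonicOfDegree k p) : hR.coeff p k = 1 := by
  have htop : hR.coeff (t ^ k) k = 1 := by
    simpa using DFunLike.congr_fun (hR.coeff_C_mul_t_pow 1 k) k
  rw [← htop, ← sub_eq_zero, ← Finsupp.sub_apply, ← map_sub]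
  exact hp k le_rfl

theorem IsMonicOfDegree.mul (hp : hR.IsMonicOfDegree k p) (hq : hR.IsMonicOfDegree l q) :
    hR.IsMonicOfDegree (k + l) (p * q) := by
  have hsplit : p * q - t ^ (k + l) = (p - t ^ k) * q + t ^ k * (q - t ^ l) := by
    rw [pow_add]
    noncomm_ring
  rw [IsMonicOfDegree, hsplit]
  exact add_mem (mul_mem_degreeLT hp hq.mem_degreeLT (by lia))
    (mul_mem_degreeLT (t_pow_mem_degreeLT k) hq (by lia))

theorem IsMonicOfDegree.sub_mem (hp : hR.IsMonicOfDegree k p) (hq : hR.IsMonicOfDegree k q) :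
    p - q ∈ hR.degreeLT k := by
  simpa using AddSubgroup.sub_mem _ hp hq

theorem IsMonicOfDegree.add (hp : hR.IsMonicOfDegree k p) (hq : q ∈ hR.degreeLT k) :
    hR.IsMonicOfDegree k (p + q) := by
  simpa [IsMonicOfDegree, add_sub_right_comm] using add_mem hp hq

end Degree

section Completeness

variable {hR : IsSkewPolyRing A σ δ R ι t} {x : A} {k : ℕ}

theorem exists_limit_mem_degreeLT
    (hcomp : ∀ s : ℕ → A, (∀ n, x ^ n ∣ s (n + 1) - s n) → ∃ a, ∀ n, x ^ n ∣ a - s n)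
    {p : ℕ → R} (hp : ∀ n, p n ∈ hR.degreeLT k) (hdvd : ∀ n, ι x ^ n ∣ p (n + 1) - p n) :
    ∃ q ∈ hR.degreeLT k, ∀ n, ι x ^ n ∣ q - p n := by
  have hcauchy (i n : ℕ) : x ^ n ∣ hR.coeff (p (n + 1)) i - hR.coeff (p n) i := by
    rw [← Finsupp.sub_apply, ← map_sub]
    exact hR.C_dvd_iff_dvd_coeff.1 (map_pow ι x n ▸ hdvd n) i
  choose c hc using fun i => hcomp (fun n => hR.coeff (p n) i) (hcauchy i)
  refine ⟨_, mem_degreeLT_iff_exists_sum.2 ⟨c, rfl⟩, fun n => ?_⟩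
  rw [← map_pow, hR.C_dvd_iff_dvd_coeff]
  intro i
  rw [map_sub, Finsupp.sub_apply, coeff_sum_range]
  split_ifs with hi
  · exact hc i n
  · rw [hp n i (not_lt.1 hi), sub_zero]
    exact dvd_zero _

theorem exists_limit_isMonicOfDegree
    (hcomp : ∀ s : ℕ → A, (∀ n, x ^ n ∣ s (n + 1) - s n) → ∃ a, ∀ n, x ^ n ∣ a - s n)
    {p : ℕ → R} (hp : ∀ n, hR.IsMonicOfDegree k (p n)) (hdvd : ∀ n, ι x ^ n ∣ p (n + 1) - p n) :
    ∃ q, hR.IsMonicOfDegree k q ∧ ∀ n, ι x ^ n ∣ q - p n := by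
  obtain ⟨q, hq, hlim⟩ := exists_limit_mem_degreeLT hcomp hp (by simpa using hdvd)
  exact ⟨q + t ^ k, by simpa [IsMonicOfDegree] using hq, fun n => by
    simpa [sub_sub_eq_add_sub] using hlim n⟩

end Completeness

section Reduction

variable {hR : IsSkewPolyRing A σ δ R ι t} {K : Type*} [CommRing K] {π : A →+* K}
  {red : R →+* K[X]} {x : A} {k : ℕ} {p : R}

theorem coeff_red (hι : ∀ a, red (ι a) = C (π a)) (ht : red t = X) (p : R) (i : ℕ) :
    (red p).coeff i = π (hR.coeff p i) := by
  induction p using hR.induction_on with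
  | add p q hp hq => simp only [map_add, Polynomial.coeff_add, Finsupp.add_apply, hp, hq]
  | monomial a j =>
    rw [map_mul, map_pow, hι, ht, coeff_C_mul_X_pow, coeff_C_mul_t_pow, Finsupp.single_apply,
      apply_ite π, map_zero]
    simp only [eq_comm]

theorem red_eq_zero_iff_C_dvd (hker : ∀ a, π a = 0 ↔ x ∣ a)
    (hred : ∀ p i, (red p).coeff i = π (hR.coeff p i)) (p : R) : red p = 0 ↔ ι x ∣ p := by
  simp only [hR.C_dvd_iff_dvd_coeff, ← hker, ← hred, Polynomial.ext_iff, Polynomial.coeff_zero]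

theorem degree_red_lt (hred : ∀ p i, (red p).coeff i = π (hR.coeff p i))
    (hp : p ∈ hR.degreeLT k) : (red p).degree < k := by
  rw [degree_lt_iff_coeff_zero]
  intro i hi
  rw [hred, hp i hi, map_zero]

theorem degree_red_le (hred : ∀ p i, (red p).coeff i = π (hR.coeff p i))
    (hp : p ∈ hR.degreeLT (k + 1)) : (red p).degree ≤ k := by
  rw [degree_le_iff_coeff_zero]
  intro i hi
  rw [hred, hp i (by exact_mod_cast hi), map_zero]

theorem exists_mem_degreeLT_red_eq (hπ : Function.Surjective π)
    (hred : ∀ p i, (red p).coeff i = π (hR.coeff p i)) {u : K[X]} (hu : u.degree < k) :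
    ∃ p ∈ hR.degreeLT k, red p = u := by
  choose lift hlift using hπ
  refine ⟨_, mem_degreeLT_iff_exists_sum.2 ⟨fun i => lift (u.coeff i), rfl⟩, ?_⟩
  ext i
  rw [hred, coeff_sum_range]
  split_ifs with hi
  · exact hlift _
  · rw [map_zero, coeff_eq_zero_of_degree_lt (hu.trans_le (by exact_mod_cast not_lt.1 hi))]

theorem red_surjective (hπ : Function.Surjective π)
    (hred : ∀ p i, (red p).coeff i = π (hR.coeff p i)) : Function.Surjective red := fun u =>
  have ⟨p, _, hp⟩ := exists_mem_degreeLT_red_eq hπ hred (k := u.natDegree + 1)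
    (degree_le_natDegree.trans_lt (by exact_mod_cast u.natDegree.lt_succ_self))
  ⟨p, hp⟩

end Reduction

section Lifting

variable {hR : IsSkewPolyRing A σ δ R ι t} {K : Type*} [CommRing K] {π : A →+* K}
  {red : R →+* K[X]} {x : A} {m l : ℕ} {f G H : R}

theorem exists_lift_of_isCoprime (hπ : Function.Surjective π) (hker : ∀ a, π a = 0 ↔ x ∣ a)
    (hred : ∀ p i, (red p).coeff i = π (hR.coeff p i)) {a : A} (ha : IsLeftRegular a)
    (hxa : x ∣ a) (hf : hR.IsMonicOfDegree (m + l) f) (hG : hR.IsMonicOfDegree m G)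
    (hH : hR.IsMonicOfDegree l H) {G' : R} (hGG' : G * ι a = ι a * G')
    (hcop : IsCoprime (red G') (red H)) (hfGH : ι a ∣ f - G * H) :
    ∃ U ∈ hR.degreeLT m, ∃ V ∈ hR.degreeLT l,
      ι a * ι x ∣ f - (G + ι a * U) * (H + ι a * V) := by
  obtain ⟨r, hr, hfr⟩ := exists_mem_degreeLT_eq_C_mul ha (hf.sub_mem (hG.mul hH)) hfGH
  have hG' : G' ∈ hR.degreeLT (m + 1) := mem_degreeLT_of_mul_C_eq ha hGG' hG.mem_degreeLT
  obtain ⟨u, v, hu, hv, hruv⟩ := exists_degree_lt_eq_mul_add_mul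
    (degree_red_le hred hG') (degree_red_le hred hH.mem_degreeLT)
    (by rw [hred, hH.coeff_eq_one, map_one]) (degree_red_lt hred hr) hcop
  obtain ⟨U, hU, rfl⟩ := exists_mem_degreeLT_red_eq hπ hred hu
  obtain ⟨V, hV, rfl⟩ := exists_mem_degreeLT_red_eq hπ hred hv
  refine ⟨U, hU, V, hV, ?_⟩
  have hexpand : f - (G + ι a * U) * (H + ι a * V) =
      ι a * (r - U * H - G' * V - U * (ι a * V)) := by
    calc _ = (f - G * H) - ι a * U * H - G * ι a * V - ι a * U * (ι a * V) := by noncomm_ring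
      _ = _ := by rw [hfr, hGG']; noncomm_ring
  have hreda : red (ι a) = 0 := (red_eq_zero_iff_C_dvd hker hred _).2 (map_dvd ι hxa)
  have hdvd : ι x ∣ r - U * H - G' * V - U * (ι a * V) := by
    rw [← red_eq_zero_iff_C_dvd hker hred]
    simp only [map_sub, map_mul, hruv, hreda]
    ring
  rw [hexpand]
  exact mul_dvd_mul_left _ hdvd

/-- `G * H` is a factorization of `f` modulo the `n`-th power of `y`, into monic factors of degrees
`m` and `l`, to which the hypothesis on residues in the skew Hensel lemma applies. -/
structure IsHenselFactorization (hR : IsSkewPolyRing A σ δ R ι t) (red : R →+* K[X]) (φ : R ≃+* R)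
    (y : R) (m l : ℕ) (f : R) (n : ℕ) (G H : R) : Prop where
  monic_left : hR.IsMonicOfDegree m G
  monic_right : hR.IsMonicOfDegree l H
  isCoprime : ∀ k, 1 ≤ k → IsCoprime (red G) (red ((φ ^ k) H))
  pow_dvd_sub : y ^ n ∣ f - G * H

theorem IsHenselFactorization.exists_succ (hπ : Function.Surjective π)
    (hker : ∀ a, π a = 0 ↔ x ∣ a) (hred : ∀ p i, (red p).coeff i = π (hR.coeff p i))
    (hx : IsLeftRegular x) {φ : R ≃+* R} (hφ : ∀ p, φ p * ι x = ι x * p)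
    (hf : hR.IsMonicOfDegree (m + l) f) {n : ℕ}
    (hGH : IsHenselFactorization hR red φ (ι x) m l f (n + 1) G H) :
    ∃ G' H', IsHenselFactorization hR red φ (ι x) m l f (n + 2) G' H' ∧
      ι x ^ (n + 1) ∣ G' - G ∧ ι x ^ (n + 1) ∣ H' - H := by
  have hredker := red_eq_zero_iff_C_dvd hker hred
  have hφx := pow_apply_eq_self (hR.isLeftRegular_C hx) hφ
  have hcop : IsCoprime (red ((φ ^ (n + 1)).symm G)) (red H) := by
    simpa only [RingEquiv.coe_toRingHom, RingEquiv.symm_apply_apply] using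
      isCoprime_map_map_of_apply_eq_self (red_surjective hπ hred) hredker
        (ψ := ((φ ^ (n + 1)).symm : R →+* R)) ((φ ^ (n + 1)).symm_apply_eq.2 (hφx _).symm)
        (hGH.isCoprime (n + 1) (by lia))
  have hconj : G * ι (x ^ (n + 1)) = ι (x ^ (n + 1)) * (φ ^ (n + 1)).symm G := by
    rw [map_pow, ← pow_apply_mul_pow hφ, RingEquiv.apply_symm_apply]
  obtain ⟨U, hU, V, hV, hdvd⟩ := exists_lift_of_isCoprime hπ hker hred (hx.pow (n + 1))
    (dvd_pow_self x n.succ_ne_zero) hf hGH.monic_left hGH.monic_right hconj hcop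
    (by rw [map_pow]; exact hGH.pow_dvd_sub)
  rw [map_pow] at hdvd
  have hredpow (p : R) : red (ι x ^ (n + 1) * p) = 0 :=
    (hredker _).2 ((dvd_pow_self _ n.succ_ne_zero).mul_right p)
  refine ⟨G + ι x ^ (n + 1) * U, H + ι x ^ (n + 1) * V, ⟨?_, ?_, fun k hk => ?_, ?_⟩, ?_, ?_⟩
  · exact hGH.monic_left.add (map_pow ι x (n + 1) ▸ C_mul_mem_degreeLT _ hU)
  · exact hGH.monic_right.add (map_pow ι x (n + 1) ▸ C_mul_mem_degreeLT _ hV)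
  · have hφH : (φ ^ k) (H + ι x ^ (n + 1) * V) = (φ ^ k) H + ι x ^ (n + 1) * (φ ^ k) V := by
      rw [map_add, map_mul, map_pow, hφx]
    rw [hφH, map_add, map_add, hredpow, hredpow, add_zero, add_zero]
    exact hGH.isCoprime k hk
  · rwa [pow_succ]
  · simp
  · simp

theorem IsHenselFactorization.exists_seq (hπ : Function.Surjective π)
    (hker : ∀ a, π a = 0 ↔ x ∣ a) (hred : ∀ p i, (red p).coeff i = π (hR.coeff p i))
    (hx : IsLeftRegular x) {φ : R ≃+* R} (hφ : ∀ p, φ p * ι x = ι x * p)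
    (hf : hR.IsMonicOfDegree (m + l) f)
    (hGH : IsHenselFactorization hR red φ (ι x) m l f 1 G H) :
    ∃ s s' : ℕ → R, s 0 = G ∧ s' 0 = H ∧ ∀ n,
      IsHenselFactorization hR red φ (ι x) m l f (n + 1) (s n) (s' n) ∧
      ι x ^ (n + 1) ∣ s (n + 1) - s n ∧ ι x ^ (n + 1) ∣ s' (n + 1) - s' n := by
  obtain ⟨s, hs0, hs⟩ := exists_seq_of_forall_exists_succ
    (P := fun n (q : R × R) => IsHenselFactorization hR red φ (ι x) m l f (n + 1) q.1 q.2)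
    (Q := fun n (q q' : R × R) => ι x ^ (n + 1) ∣ q'.1 - q.1 ∧ ι x ^ (n + 1) ∣ q'.2 - q.2)
    (a := (G, H)) hGH fun n q hq =>
      have ⟨G', H', h⟩ := hq.exists_succ hπ hker hred hx hφ hf
      ⟨(G', H'), h⟩
  exact ⟨fun n => (s n).1, fun n => (s n).2, congrArg Prod.fst hs0, congrArg Prod.snd hs0, hs⟩

theorem IsHenselFactorization.exists_factorization
    (hsep : ∀ a : A, (∀ n : ℕ, x ^ n ∣ a) → a = 0)
    (hcomp : ∀ s : ℕ → A, (∀ n, x ^ n ∣ s (n + 1) - s n) → ∃ a, ∀ n, x ^ n ∣ a - s n)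
    (hπ : Function.Surjective π) (hker : ∀ a, π a = 0 ↔ x ∣ a)
    (hred : ∀ p i, (red p).coeff i = π (hR.coeff p i)) (hx : IsLeftRegular x) {φ : R ≃+* R}
    (hφ : ∀ p, φ p * ι x = ι x * p) (hf : hR.IsMonicOfDegree (m + l) f)
    (hGH : IsHenselFactorization hR red φ (ι x) m l f 1 G H) :
    ∃ G' H', hR.IsMonicOfDegree m G' ∧ hR.IsMonicOfDegree l H' ∧
      ι x ∣ G' - G ∧ ι x ∣ H' - H ∧ f = G' * H' := by
  obtain ⟨s, s', rfl, rfl, hs⟩ := hGH.exists_seq hπ hker hred hx hφ hf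
  obtain ⟨G', hG', hsG'⟩ := exists_limit_isMonicOfDegree hcomp (fun n => (hs n).1.monic_left)
    fun n => (pow_dvd_pow _ n.le_succ).trans (hs n).2.1
  obtain ⟨H', hH', hsH'⟩ := exists_limit_isMonicOfDegree hcomp (fun n => (hs n).1.monic_right)
    fun n => (pow_dvd_pow _ n.le_succ).trans (hs n).2.2
  refine ⟨G', H', hG', hH', ?_, ?_, sub_eq_zero.1 (hR.eq_zero_of_forall_C_pow_dvd hsep fun n => ?_)⟩
  · simpa using dvd_add (hsG' 1) ((pow_dvd_pow _ le_rfl).trans (hs 0).2.1)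
  · simpa using dvd_add (hsH' 1) ((pow_dvd_pow _ le_rfl).trans (hs 0).2.2)
  · have hnormal (p : R) : ι x ^ n ∣ p * ι x ^ n :=
      ⟨(φ ^ n).symm p, by rw [← pow_apply_mul_pow hφ, RingEquiv.apply_symm_apply]⟩
    have hsplit : f - G' * H' = (f - s n * s' n) - (G' - s n) * H' - s n * (H' - s' n) := by
      noncomm_ring
    rw [hsplit]
    exact dvd_sub (dvd_sub ((pow_dvd_pow _ n.le_succ).trans (hs n).1.pow_dvd_sub)
      ((hsG' n).mul_right _)) (dvd_mul_left_of_normal hnormal (hsH' n) _)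

end Lifting

end IsSkewPolyRing

theorem skew_hensel_general
    {A R K : Type*} [Ring A] [Ring R] [CommRing K] {σ : A →+* A} {δ : A → A} {ι : A →+* R} {t : R}
    (hR : IsSkewPolyRing A σ δ R ι t) {x : A} (hx : x = 0 ∨ IsLeftRegular x)
    (hsep : ∀ a : A, (∀ n : ℕ, x ^ n ∣ a) → a = 0)
    (hcomp : ∀ s : ℕ → A, (∀ n, x ^ n ∣ s (n + 1) - s n) → ∃ a, ∀ n, x ^ n ∣ a - s n)
    {π : A →+* K} (hπ : Function.Surjective π) (hker : ∀ a, π a = 0 ↔ x ∣ a)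
    {φ : R ≃+* R} (hφ : ∀ p, φ p * ι x = ι x * p)
    {red : R →+* K[X]} (hι : ∀ a, red (ι a) = C (π a)) (ht : red t = X)
    {m l : ℕ} {f g h : R} (hf : hR.IsMonicOfDegree (m + l) f) (hg : hR.IsMonicOfDegree m g)
    (hh : hR.IsMonicOfDegree l h) (hfgh : red f = red g * red h)
    (hcop : ∀ n, 1 ≤ n → IsCoprime (red g) (red ((φ ^ n) h))) :
    ∃ G H, hR.IsMonicOfDegree m G ∧ hR.IsMonicOfDegree l H ∧
      red G = red g ∧ red H = red h ∧ f = G * H := by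
  have hred : ∀ p i, (red p).coeff i = π (hR.coeff p i) := IsSkewPolyRing.coeff_red hι ht
  have hredker := IsSkewPolyRing.red_eq_zero_iff_C_dvd hker hred
  have hdvd : ι x ∣ f - g * h := by
    rw [← hredker, map_sub, map_mul, hfgh, sub_self]
  rcases hx with rfl | hx
  · rw [map_zero, zero_dvd_iff, sub_eq_zero] at hdvd
    exact ⟨g, h, hg, hh, rfl, rfl, hdvd⟩
  obtain ⟨G, H, hG, hH, hGg, hHh, hGH⟩ :=
    IsSkewPolyRing.IsHenselFactorization.exists_factorization hsep hcomp hπ hker hred hx hφ hf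
      ⟨hg, hh, hcop, by rwa [pow_one]⟩
  have hred_eq {p q : R} (hpq : ι x ∣ p - q) : red p = red q := by
    rwa [← sub_eq_zero, ← map_sub, hredker]
  exact ⟨G, H, hG, hH, hred_eq hGg, hred_eq hHh, hGH⟩

/-- **A skew Hensel's lemma.** Let `A` be a (possibly noncommutative) domain, complete and
separated with respect to a two-sided ideal `m = xA = Ax`, with `K = A/m` a (commutative)
field; let `σ` be an endomorphism and `δ` a `σ`-derivation of `A` preserving `m` and
inducing the identity, resp. zero, on `K`; let `R = A[t,σ,δ]`, let `φ` be the automorphism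
of `R` with `φ(p)·x = x·p`, and let `red : R → K[t]` be the reduction map. If `f ∈ R` is
monic of degree `d`, and `g, h ∈ R` are monic of degrees `m` and `d-m` with `f̄ = ḡ·h̄`,
such that `ḡ` and `(φⁿ(h))‾` are relatively prime in `K[t]` for every `n ≥ 1`, then there
are monic `ĝ, ĥ ∈ R` of degrees `m` and `d-m` with `ĝ‾ = ḡ`, `ĥ‾ = h̄` and `f = ĝ·ĥ`. -/
theorem skew_hensel
    (A : Type*) [Ring A] [IsDomain A] (x : A)
    -- m = xA = Ax is a two-sided ideal
    (hxA : ∀ a : A, ∃ b : A, x * a = b * x)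
    (hAx : ∀ a : A, ∃ b : A, a * x = x * b)
    -- A is separated with respect to m
    (hsep : ∀ a : A, (∀ n : ℕ, ∃ b : A, a = x ^ n * b) → a = 0)
    -- A is complete with respect to m
    (hcomp : ∀ f : ℕ → A, (∀ n : ℕ, ∃ b : A, f (n + 1) - f n = x ^ n * b) →
      ∃ a : A, ∀ n : ℕ, ∃ b : A, a - f n = x ^ n * b)
    -- K = A/m is a (commutative) field, via the quotient map π with kernel m
    (K : Type*) [Field K] (π : A →+* K) (hπ : Function.Surjective π)
    (hker : ∀ a : A, π a = 0 ↔ ∃ b : A, a = x * b)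
    -- σ and δ, preserving m and inducing the identity resp. zero on K
    (σ : A →+* A) (δ : A → A) (hδ : IsSigmaDerivation σ δ)
    (hσm : ∀ a b : A, a = x * b → ∃ c : A, σ a = x * c)
    (hδm : ∀ a b : A, a = x * b → ∃ c : A, δ a = x * c)
    (hσK : ∀ a : A, π (σ a) = π a)
    (hδK : ∀ a : A, π (δ a) = 0)
    -- R = A[t,σ,δ]
    (R : Type*) [Ring R] (ι : A →+* R) (t : R)
    (hR : IsSkewPolyRing A σ δ R ι t)
    -- φ is the automorphism of R with φ(p)·x = x·p
    (φ : R ≃+* R) (hφ : ∀ p : R, φ p * ι x = ι x * p)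
    -- red : R → K[t] is the reduction map Σ aᵢ tⁱ ↦ Σ π(aᵢ) Xⁱ
    (red : R →+* Polynomial K)
    (hred : ∀ a : A, red (ι a) = Polynomial.C (π a)) (hredt : red t = Polynomial.X)
    -- f, g, h monic of degrees d, m, d - m
    (d m : ℕ) (hm : m ≤ d) (f g h : R)
    (cf : ℕ → A) (hf : f = t ^ d + ∑ i ∈ Finset.range d, ι (cf i) * t ^ i)
    (cg : ℕ → A) (hg : g = t ^ m + ∑ i ∈ Finset.range m, ι (cg i) * t ^ i)
    (ch : ℕ → A) (hh : h = t ^ (d - m) + ∑ i ∈ Finset.range (d - m), ι (ch i) * t ^ i)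
    -- f̄ = ḡ h̄, and ḡ is coprime to (φⁿ(h))‾ for all n ≥ 1
    (hfgh : red f = red g * red h)
    (hcop : ∀ n : ℕ, 1 ≤ n → IsCoprime (red g) (red ((φ ^ n) h))) :
    ∃ (G H : R) (cG cH : ℕ → A),
      G = t ^ m + ∑ i ∈ Finset.range m, ι (cG i) * t ^ i ∧
      H = t ^ (d - m) + ∑ i ∈ Finset.range (d - m), ι (cH i) * t ^ i ∧
      red G = red g ∧ red H = red h ∧ f = G * H := by
  have hd : m + (d - m) = d := Nat.add_sub_of_le hm
  obtain ⟨G, H, hG, hH, hGg, hHh, hGH⟩ :=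
    skew_hensel_general hR ((eq_or_ne x 0).imp_right mul_right_injective₀) hsep hcomp hπ hker
      hφ hred hredt (IsSkewPolyRing.isMonicOfDegree_iff_exists_sum.2 ⟨cf, by rwa [hd]⟩)
      (IsSkewPolyRing.isMonicOfDegree_iff_exists_sum.2 ⟨cg, hg⟩)
      (IsSkewPolyRing.isMonicOfDegree_iff_exists_sum.2 ⟨ch, hh⟩) hfgh hcop
  obtain ⟨cG, hG⟩ := IsSkewPolyRing.isMonicOfDegree_iff_exists_sum.1 hG
  obtain ⟨cH, hH⟩ := IsSkewPolyRing.isMonicOfDegree_iff_exists_sum.1 hH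
  exact ⟨G, H, cG, cH, hG, hH, hGg, hHh, hGH⟩
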